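/- In the Riemannian (full-rank) case of the canonical structural equations, i.e. with C₁ = 0 and C₂ = I_n: let n ≥ 1, let R : ℝ → Mat_{n×n}(ℝ) be a C^∞ family of symmetric matrices, and let A, B, C, D : ℝ → Mat_{n×n}(ℝ) be the unique solution of d/dt [A B; C D] = [0 −I_n; R(t) 0] · [A B; C D] with A(0) = D(0) = I_n and B(0) = C(0) = 0. Then B(t) is invertible for all sufficiently small t > 0, and as t → 0⁺ one has d/dt ( B(t)⁻¹ A(t) ) = (1/t²) I_n + (1/3) R(0) + O(t). (This expresses that in the Riemannian case the singular coefficient 𝓘_λ equals the identity and the zeroth-order invariant 𝒬⁰_λ equals one third of the directional curvature R(·,γ̇)γ̇.) -/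

import Mathlib

open Matrix Filter Topology Asymptotics

noncomputable section
section aux
attribute [local instance] Matrix.frobeniusNormedAddCommGroup Matrix.frobeniusNormedSpace Matrix.frobeniusNormedRing Matrix.frobeniusNormedAlgebra

lemma aux_hasDerivAt {n : ℕ} {F : ℝ → Matrix (Fin n) (Fin n) ℝ} {F' : Matrix (Fin n) (Fin n) ℝ} {t : ℝ}
    (h : ∀ i j, HasDerivAt (fun s => F s i j) (F' i j) t) : HasDerivAt F F' t := by
  have : HasDerivAt (fun s => ∑ i, ∑ j, F s i j • Matrix.single i j (1:ℝ)) (∑ i, ∑ j, F' i j • Matrix.single i j (1:ℝ)) t := by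
    refine HasDerivAt.fun_sum fun i _ => HasDerivAt.fun_sum fun j _ => (h i j).smul_const _
  have e : ∀ M : Matrix (Fin n) (Fin n) ℝ, ∑ i, ∑ j, M i j • Matrix.single i j (1:ℝ) = M := by
    intro M
    conv_rhs => rw [matrix_eq_sum_single M]
    simp
  simpa only [e] using this

lemma aux_entry {n : ℕ} (M : Matrix (Fin n) (Fin n) ℝ) (i j) : ‖M i j‖ ≤ ‖M‖ := by
  rw [Matrix.frobenius_norm_def, ← Real.sqrt_eq_rpow]
  apply Real.le_sqrt_of_sq_le
  calc ‖M i j‖^2 ≤ ∑ j, ‖M i j‖^2 := Finset.single_le_sum (f := fun j => ‖M i j‖^2) (fun _ _ => by positivity) (Finset.mem_univ j)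
    _ ≤ ∑ i, ∑ j, ‖M i j‖^2 := Finset.single_le_sum (f := fun i => ∑ j, ‖M i j‖^2) (fun _ _ => by positivity) (Finset.mem_univ i)
    _ = _ := by norm_cast

def aux_entryL {n : ℕ} (i j : Fin n) : Matrix (Fin n) (Fin n) ℝ →L[ℝ] ℝ :=
  LinearMap.mkContinuous { toFun := fun M => M i j, map_add' := fun _ _ => rfl, map_smul' := fun _ _ => rfl } 1
   (fun M => by rw [one_mul]; exact aux_entry M i j)

lemma aux_hasDerivAt_entry {n : ℕ} {F : ℝ → Matrix (Fin n) (Fin n) ℝ} {F' : Matrix (Fin n) (Fin n) ℝ} {t : ℝ}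
    (h : HasDerivAt F F' t) (i j) : HasDerivAt (fun s => F s i j) (F' i j) t :=
  (aux_entryL i j).hasFDerivAt.comp_hasDerivAt t h

lemma aux_transpose {n : ℕ} {F : ℝ → Matrix (Fin n) (Fin n) ℝ} {F' : Matrix (Fin n) (Fin n) ℝ} {t : ℝ}
    (h : HasDerivAt F F' t) : HasDerivAt (fun s => (F s)ᵀ) F'ᵀ t :=
  aux_hasDerivAt fun i j => aux_hasDerivAt_entry h j i

lemma aux_const {n : ℕ} {F : ℝ → Matrix (Fin n) (Fin n) ℝ} 
    (h : ∀ t, HasDerivAt F 0 t) (t : ℝ) : F t = F 0 :=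
  is_const_of_deriv_eq_zero (fun t => (h t).differentiableAt) (fun t => (h t).deriv) t 0

lemma aux_bigO {E : Type*} [NormedAddCommGroup E] [NormedSpace ℝ E] {f f' : ℝ → E} (k : ℕ)
    (h : ∀ t, HasDerivAt f (f' t) t) (h0 : f 0 = 0) (hO : f' =O[𝓝 0] fun t : ℝ => t ^ k) :
    f =O[𝓝 0] fun t : ℝ => t ^ (k+1) := by
  obtain ⟨c, hc⟩ := hO.bound
  obtain ⟨ε, hε, hb⟩ := Metric.eventually_nhds_iff.1 hc
  refine IsBigO.of_bound c ?_
  filter_upwards [Metric.ball_mem_nhds (0:ℝ) hε] with t ht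
  have ht : |t| < ε := by simpa using ht
  have hs : ∀ x ∈ Set.uIcc 0 t, |x| ≤ |t| := fun x hx => by
    simpa using Set.abs_sub_left_of_mem_uIcc hx
  have := (convex_uIcc (0:ℝ) t).norm_image_sub_le_of_norm_hasDerivWithin_le (f := f) (f' := f')
    (C := c * |t|^k) (x := 0) (y := t) (fun x _ => (h x).hasDerivWithinAt) (fun x hx => by
      have h1 := hb (y := x) (by simpa using (hs x hx).trans_lt ht)
      have hc0 : 0 ≤ c ∨ c < 0 := le_or_gt 0 c
      rcases hc0 with h0 | h0
      · refine h1.trans ?_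
        rw [norm_pow, Real.norm_eq_abs]
        exact mul_le_mul_of_nonneg_left (pow_le_pow_left₀ (abs_nonneg x) (hs x hx) k) h0
      · have h2 := hb (y := ε/2) (by rw [Real.dist_eq, sub_zero, abs_of_pos (by positivity)]; linarith)
        have h3 : 0 < ‖(ε/2)^k‖ := norm_pos_iff.2 (pow_ne_zero _ (by positivity))
        nlinarith [norm_nonneg (f' (ε/2))]) (by simp) (by simp)
  simpa [h0, pow_succ, mul_assoc] using this

theorem aux_main (n : ℕ) 
    (R A B C D : ℝ → Matrix (Fin n) (Fin n) ℝ)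
    (hR : DifferentiableAt ℝ R 0)
    (hRsymm : ∀ t, (R t)ᵀ = R t)
    (hA0 : A 0 = 1) (hB0 : B 0 = 0) (hC0 : C 0 = 0) (hD0 : D 0 = 1)
    (hA : ∀ t, HasDerivAt A (-(C t)) t)
    (hB : ∀ t, HasDerivAt B (-(D t)) t)
    (hC : ∀ t, HasDerivAt C (R t * A t) t)
    (hD : ∀ t, HasDerivAt D (R t * B t) t) :
    (∀ᶠ t in 𝓝[>] 0, IsUnit (B t)) ∧
      (fun t : ℝ =>
        ((B t)ᵀ * B t)⁻¹
          - ((1/t^2) • (1 : Matrix (Fin n) (Fin n) ℝ) + (1/3 : ℝ) • R 0))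
        =O[𝓝[>] 0] fun t : ℝ => t := by
  have pw : ∀ {a b : ℕ}, b ≤ a → (fun t : ℝ => t^a) =O[𝓝 0] fun t : ℝ => t^b := fun h => by
    obtain ⟨c, rfl⟩ := Nat.exists_eq_add_of_le h
    simp only [pow_add]
    have : (fun t : ℝ => t^c) =O[𝓝 0] fun _ => (1:ℝ) :=
      (by fun_prop : ContinuousAt (fun t : ℝ => t^c) 0).isBigO_one ℝ
    simpa using (isBigO_refl (fun t : ℝ => t^_) (𝓝 0)).mul this
  have r0 : R =O[𝓝 0] fun t : ℝ => t^0 := by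
    simpa using hR.continuousAt.isBigO_one ℝ
  have r1 : (fun t => R t - R 0) =O[𝓝 0] fun t : ℝ => t^1 := by
    simpa using hR.isBigO_sub
  have d0 : (fun t => -D t) =O[𝓝 0] fun t : ℝ => t^0 := by
    simpa using (hD 0).continuousAt.isBigO_one ℝ
  have b1 := aux_bigO 0 hB hB0 d0
  have d1 : (fun t => D t - 1) =O[𝓝 0] fun t : ℝ => t^2 :=
    aux_bigO 1 (fun t => (hD t).sub_const 1) (by simp [hD0]) (by simpa using r0.mul b1)
  have dpow : ∀ (k : ℕ) (X : Matrix (Fin n) (Fin n) ℝ) (t : ℝ), HasDerivAt (fun t : ℝ => t^(k+1) • X) (((k+1)*t^k) • X) t := by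
    intro k X t
    have := (hasDerivAt_pow (k+1) t).smul_const X
    refine HasDerivAt.congr_deriv this ?_
    simp
  have b2 : (fun t => B t + t^1 • 1) =O[𝓝 0] fun t : ℝ => t^3 :=
    aux_bigO 2 (fun t => (hB t).add (dpow 0 1 t)) (by simp [hB0]) (by
      refine d1.neg_left.congr_left fun t => ?_
      simp; abel)
  have d2 : (fun t => D t - 1 + t^2 • ((1/2:ℝ) • R 0)) =O[𝓝 0] fun t : ℝ => t^3 := by
    refine aux_bigO 2 (fun t => ((hD t).sub_const 1).add (dpow 1 _ t)) (by simp [hD0]) ?_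
    have e1 := r1.mul b1
    have e2 := ((isBigO_refl (fun _ : ℝ => R 0) (𝓝 0)).trans (isBigO_const_const (R 0) (one_ne_zero (α := ℝ)) _)).mul (b2.trans (pw (show 2 ≤ 3 by norm_num)))
    refine ((e1.trans (by simpa [pow_two] using isBigO_refl _ _)).add (e2.trans (by simpa using isBigO_refl _ _))).congr_left fun t => ?_
    simp [sub_mul, mul_add, smul_smul]
    module
  have b3 : (fun t => B t + t^1 • 1 + t^3 • (-(1/6:ℝ) • R 0)) =O[𝓝 0] fun t : ℝ => t^4 := by
    refine aux_bigO 3 (fun t => ((hB t).add (dpow 0 1 t)).add (dpow 2 _ t)) (by simp [hB0]) ?_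
    refine d2.neg_left.congr_left fun t => ?_
    simp only [smul_smul]; push_cast; norm_num; module
  -- M
  have tr : ∀ {F : ℝ → Matrix (Fin n) (Fin n) ℝ} {g : ℝ → ℝ}, F =O[𝓝 0] g → (fun t => (F t)ᵀ) =O[𝓝 0] g := by
    intro F g h
    refine IsBigO.trans (IsBigO.of_norm_le (g := fun t => ‖F t‖) fun t => ?_) h.norm_left
    rw [Matrix.frobenius_norm_transpose]
  have t3 : ∀ {a : ℕ} (X : Matrix (Fin n) (Fin n) ℝ), (fun t : ℝ => t^a • X) =O[𝓝 0] fun t : ℝ => t^a := by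
    intro a X
    simpa using (isBigO_refl (fun t : ℝ => t^a) (𝓝 0)).smul (isBigO_const_const X (one_ne_zero (α := ℝ)) _)
  have m : (fun t => (B t)ᵀ * B t - (t^2 • 1 - t^4 • ((1/3:ℝ) • R 0))) =O[𝓝 0] fun t : ℝ => t^5 := by
    -- BᵀB with B = K + F, K = -t + t^3/6 R0
    have e1 := (tr b3).mul b1
    have e2 := (((t3 (a := 1) (-1)).add ((t3 (a := 3) ((1/6:ℝ) • R 0)).trans (pw (by norm_num))))).mul b3
    have e3 := t3 (a := 6) ((1/36:ℝ) • (R 0 * R 0))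
    refine (((e1.trans ?_).add (e2.trans ?_)).add (e3.trans (pw (show 5 ≤ 6 by norm_num)))).congr_left fun t => ?_
    · simpa [← pow_succ] using isBigO_refl _ _
    · simpa [← pow_succ'] using isBigO_refl _ _
    · simp [hRsymm, add_mul, mul_add, smul_smul]
      module
  have pinv : ∀ {a b : ℕ} {c : ℕ} {F : ℝ → Matrix (Fin n) (Fin n) ℝ}, a = b + c → F =O[𝓝 0] (fun t : ℝ => t^a) →
      (fun t => (t^b)⁻¹ • F t) =O[𝓝[>] 0] (fun t : ℝ => t^c) := by
    intro a b c F h hF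
    refine ((isBigO_refl (fun t : ℝ => (t^b)⁻¹) (𝓝[>] 0)).smul (hF.mono nhdsWithin_le_nhds)).trans_eventuallyEq ?_
    filter_upwards [self_mem_nhdsWithin] with t ht
    have : t ≠ 0 := ne_of_gt ht
    subst h
    simp only [smul_eq_mul, pow_add]
    field_simp
  have lim : ∀ {F : ℝ → Matrix (Fin n) (Fin n) ℝ} {c : ℕ} (X : Matrix (Fin n) (Fin n) ℝ), c ≠ 0 → (fun t => F t - X) =O[𝓝[>] 0] (fun t : ℝ => t^c) → Tendsto F (𝓝[>] 0) (𝓝 X) := by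
    intro F c X hc h
    have h1 : Tendsto (fun t : ℝ => t^c) (𝓝[>] 0) (𝓝 0) := by
      have : ContinuousAt (fun t : ℝ => t^c) 0 := by fun_prop
      simpa [ContinuousAt, hc] using this.tendsto.mono_left nhdsWithin_le_nhds
    have := (h.trans_tendsto h1).add_const X
    simp only [sub_add_cancel, zero_add] at this
    exact this
  have un : ∀ᶠ X in 𝓝 (1 : Matrix (Fin n) (Fin n) ℝ), IsUnit X :=
    Units.isOpen.mem_nhds isUnit_one
  have pB := pinv (b := 1) (c := 2) rfl b2
  have uB : ∀ᶠ t in 𝓝[>] (0:ℝ), IsUnit (B t) := by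
    have l : Tendsto (fun t => (-t⁻¹) • B t) (𝓝[>] 0) (𝓝 1) := by
      refine lim (c := 2) 1 (by norm_num) (pB.neg_left.congr' ?_ EventuallyEq.rfl)
      filter_upwards [self_mem_nhdsWithin] with t ht
      have : t ≠ 0 := ne_of_gt ht
      simp [smul_smul, this]
      abel
    filter_upwards [l.eventually un, self_mem_nhdsWithin] with t ht h0
    have h0 : t ≠ 0 := ne_of_gt h0
    rw [Matrix.isUnit_iff_isUnit_det, Matrix.det_smul] at ht
    rw [Matrix.isUnit_iff_isUnit_det]
    exact isUnit_of_mul_isUnit_right ht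
  refine ⟨uB, ?_⟩
  set P : ℝ → Matrix (Fin n) (Fin n) ℝ := fun t => (t^2)⁻¹ • ((B t)ᵀ * B t) with hP
  have p3 : (fun t => P t - (1 - t^2 • ((1/3:ℝ) • R 0))) =O[𝓝[>] 0] fun t : ℝ => t^3 := by
    refine (pinv (b := 2) (c := 3) rfl m).congr' ?_ EventuallyEq.rfl
    filter_upwards [self_mem_nhdsWithin] with t ht
    have h0 : t ≠ 0 := ne_of_gt ht
    simp only [hP, smul_sub, smul_smul]
    congr 3
    · field_simp; simp
    · field_simp
  have pl : Tendsto P (𝓝[>] 0) (𝓝 1) := by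
    refine lim (c := 2) 1 (by norm_num) ?_
    refine ((p3.trans ((pw (show 2 ≤ 3 by norm_num)).mono nhdsWithin_le_nhds)).sub ((t3 (a := 2) ((1/3:ℝ) • R 0)).mono nhdsWithin_le_nhds)).congr_left fun t => ?_
    abel
  have pil : (fun t => (P t)⁻¹) =O[𝓝[>] 0] fun t : ℝ => t^0 := by
    have := ((NormedRing.inverse_continuousAt (1 : (Matrix (Fin n) (Fin n) ℝ)ˣ)).tendsto.comp pl).isBigO_one ℝ
    simpa [Matrix.nonsing_inv_eq_ringInverse, Function.comp_def] using this
  -- P * (P⁻¹ - 1 - t^2 R0/3) = 1 - P - t²/3 P R0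
  have q : (fun t => 1 - P t - P t * (t^2 • ((1/3:ℝ) • R 0))) =O[𝓝[>] 0] fun t : ℝ => t^3 := by
    have e1 := p3.mul (((t3 (a := 2) ((1/3:ℝ) • R 0)).trans (pw (show 0 ≤ 2 by norm_num))).mono nhdsWithin_le_nhds)
    have e2 := (((t3 (a := 4) ((1/9:ℝ) • (R 0 * R 0))).trans (pw (show 3 ≤ 4 by norm_num))).mono (nhdsWithin_le_nhds (s := Set.Ioi 0)))
    simp only [pow_zero, mul_one] at e1
    refine ((p3.neg_left.sub e1).add e2).congr_left fun t => ?_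
    simp only [sub_mul, one_mul, smul_mul_smul_comm, smul_smul]
    match_scalars <;> ring
  have q2 := pil.mul q
  have q3 := (isBigO_refl (fun t : ℝ => (t^2)⁻¹) (𝓝[>] 0)).smul q2
  refine q3.congr' ?_ ?_
  · filter_upwards [self_mem_nhdsWithin, uB, pl.eventually un] with t ht hu hp
    have h0 : t ≠ 0 := ne_of_gt ht
    have hpd := (Matrix.isUnit_iff_isUnit_det _).1 hp
    have hi : (P t)⁻¹ * P t = 1 := Matrix.nonsing_inv_mul _ hpd
    have hM : ((B t)ᵀ * B t)⁻¹ = (t^2)⁻¹ • (P t)⁻¹ := by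
      apply Matrix.inv_eq_left_inv
      rw [← hi]
      simp [hP]
    rw [hM, mul_sub, mul_sub, ← mul_assoc, hi]
    simp only [one_mul, mul_one, smul_sub, smul_smul]
    match_scalars <;> field_simp
  · filter_upwards [self_mem_nhdsWithin] with t ht
    have h0 : t ≠ 0 := ne_of_gt ht
    simp; field_simp

theorem aux_deriv (n : ℕ) 
    (R A B C D : ℝ → Matrix (Fin n) (Fin n) ℝ)
    (hRsymm : ∀ t, (R t)ᵀ = R t)
    (hA0 : A 0 = 1) (hB0 : B 0 = 0) (hC0 : C 0 = 0) (hD0 : D 0 = 1)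
    (hA : ∀ t, HasDerivAt A (-(C t)) t)
    (hB : ∀ t, HasDerivAt B (-(D t)) t)
    (hC : ∀ t, HasDerivAt C (R t * A t) t)
    (hD : ∀ t, HasDerivAt D (R t * B t) t) (t : ℝ) (hu : IsUnit (B t)) :
    HasDerivAt (fun s => (B s)⁻¹ * A s) (((B t)ᵀ * B t)⁻¹) t := by
  have w1 : (D t)ᵀ * A t - (B t)ᵀ * C t = 1 := by
    have := aux_const (F := fun t => (D t)ᵀ * A t - (B t)ᵀ * C t) (fun t => by
      refine (((aux_transpose (hD t)).mul (hA t)).sub ((aux_transpose (hB t)).mul (hC t))).congr_deriv ?_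
      simp [hRsymm, mul_assoc]
      abel) t
    simpa [hA0, hB0, hC0, hD0] using this
  have w2 : (D t)ᵀ * B t - (B t)ᵀ * D t = 0 := by
    have := aux_const (F := fun t => (D t)ᵀ * B t - (B t)ᵀ * D t) (fun t => by
      refine (((aux_transpose (hD t)).mul (hB t)).sub ((aux_transpose (hB t)).mul (hD t))).congr_deriv ?_
      simp [hRsymm, mul_assoc]
      abel) t
    simpa [hA0, hB0, hC0, hD0] using this
  have hd := (Matrix.isUnit_iff_isUnit_det _).1 hu
  have hi : HasDerivAt (fun s => (B s)⁻¹) ((B t)⁻¹ * D t * (B t)⁻¹) t := by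
    obtain ⟨u, hu⟩ := hu
    have h := (hasFDerivAt_ringInverse (𝕜 := ℝ) u)
    rw [hu] at h
    have := h.comp_hasDerivAt t (hB t)
    simp only [Matrix.nonsing_inv_eq_ringInverse]
    refine this.congr_deriv ?_
    rw [← hu]
    simp
  refine (hi.mul (hA t)).congr_deriv ?_
  symm
  have hl : (B t)⁻¹ * B t = 1 := Matrix.nonsing_inv_mul _ hd
  have hr : B t * (B t)⁻¹ = 1 := Matrix.mul_nonsing_inv _ hd
  apply Matrix.inv_eq_right_inv
  have w2' : (B t)ᵀ * D t = (D t)ᵀ * B t := (sub_eq_zero.1 w2).symm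
  calc (B t)ᵀ * B t * ((B t)⁻¹ * D t * (B t)⁻¹ * A t + (B t)⁻¹ * -C t) 
      = (B t)ᵀ * (B t * (B t)⁻¹) * D t * (B t)⁻¹ * A t - (B t)ᵀ * (B t * (B t)⁻¹) * C t := by noncomm_ring
    _ = ((B t)ᵀ * D t) * (B t)⁻¹ * A t - (B t)ᵀ * C t := by rw [hr]; simp
    _ = (D t)ᵀ * (B t * (B t)⁻¹) * A t - (B t)ᵀ * C t := by rw [w2']; noncomm_ring
    _ = 1 := by rw [hr, mul_one, w1]

theorem aux_final (n : ℕ) 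
    (R A B C D : ℝ → Matrix (Fin n) (Fin n) ℝ)
    (hRsmooth : ∀ i j, ContDiff ℝ (⊤ : ℕ∞) fun t => R t i j)
    (hRsymm : ∀ t, (R t)ᵀ = R t)
    (hA0 : A 0 = 1) (hB0 : B 0 = 0) (hC0 : C 0 = 0) (hD0 : D 0 = 1)
    (hA : ∀ t i j, HasDerivAt (fun s => A s i j) ((-(C t)) i j) t)
    (hB : ∀ t i j, HasDerivAt (fun s => B s i j) ((-(D t)) i j) t)
    (hC : ∀ t i j, HasDerivAt (fun s => C s i j) ((R t * A t) i j) t)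
    (hD : ∀ t i j, HasDerivAt (fun s => D s i j) ((R t * B t) i j) t) :
    (∃ ε > (0:ℝ), ∀ t ∈ Set.Ioo 0 ε, IsUnit (B t)) ∧
    ∀ i j : Fin n,
      (fun t : ℝ =>
        deriv (fun s => ((B s)⁻¹ * A s) i j) t
          - ((1/t^2) * (1 : Matrix (Fin n) (Fin n) ℝ) i j + (1/3) * R 0 i j))
        =O[𝓝[>] 0] fun t : ℝ => t := by
  have hA' := fun t => aux_hasDerivAt (hA t)
  have hB' := fun t => aux_hasDerivAt (hB t)
  have hC' := fun t => aux_hasDerivAt (hC t)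
  have hD' := fun t => aux_hasDerivAt (hD t)
  have hR : DifferentiableAt ℝ R 0 := 
    (aux_hasDerivAt (F' := Matrix.of fun i j => deriv (fun t => R t i j) 0) fun i j =>
      (((hRsmooth i j).differentiable (by simp)) 0).hasDerivAt).differentiableAt
  obtain ⟨h1, h2⟩ := aux_main n R A B C D hR hRsymm hA0 hB0 hC0 hD0 hA' hB' hC' hD'
  constructor
  · obtain ⟨ε, hε, h⟩ := mem_nhdsGT_iff_exists_Ioo_subset.1 h1
    exact ⟨ε, hε, fun t ht => h ht⟩
  · intro i j
    refine IsBigO.trans (IsBigO.of_bound 1 ?_) h2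
    filter_upwards [h1] with t ht
    rw [(aux_hasDerivAt_entry (aux_deriv n R A B C D hRsymm hA0 hB0 hC0 hD0 hA' hB' hC' hD' t ht) i j).deriv, one_mul]
    exact aux_entry (((B t)ᵀ * B t)⁻¹
          - ((1/t^2) • (1 : Matrix (Fin n) (Fin n) ℝ) + (1/3 : ℝ) • R 0)) i j
end aux

/-- Riemannian (full-rank) case of the canonical structural equations
(`C₁ = 0`, `C₂ = Iₙ`): for the solution of `Ȧ = −C`, `Ḃ = −D`, `Ċ = R(t)A`, `Ḋ = R(t)B`
with `A(0) = D(0) = Iₙ`, `B(0) = C(0) = 0`, the matrix `B(t)` is invertible for all small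
`t > 0` and `d/dt (B(t)⁻¹A(t)) = (1/t²)Iₙ + (1/3)R(0) + O(t)` as `t → 0⁺`. -/
theorem riemannian_Q0_is_third_of_curvature (n : ℕ) (hn : 1 ≤ n)
    (R A B C D : ℝ → Matrix (Fin n) (Fin n) ℝ)
    (hRsmooth : ∀ i j, ContDiff ℝ (⊤ : ℕ∞) fun t => R t i j)
    (hRsymm : ∀ t, (R t)ᵀ = R t)
    (hA0 : A 0 = 1) (hB0 : B 0 = 0) (hC0 : C 0 = 0) (hD0 : D 0 = 1)
    (hA : ∀ t i j, HasDerivAt (fun s => A s i j) ((-(C t)) i j) t)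
    (hB : ∀ t i j, HasDerivAt (fun s => B s i j) ((-(D t)) i j) t)
    (hC : ∀ t i j, HasDerivAt (fun s => C s i j) ((R t * A t) i j) t)
    (hD : ∀ t i j, HasDerivAt (fun s => D s i j) ((R t * B t) i j) t) :
    (∃ ε > (0:ℝ), ∀ t ∈ Set.Ioo 0 ε, IsUnit (B t)) ∧
    ∀ i j : Fin n,
      (fun t : ℝ =>
        deriv (fun s => ((B s)⁻¹ * A s) i j) t
          - ((1/t^2) * (1 : Matrix (Fin n) (Fin n) ℝ) i j + (1/3) * R 0 i j))
        =O[𝓝[>] 0] fun t : ℝ => t := 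
  aux_final n R A B C D hRsmooth hRsymm hA0 hB0 hC0 hD0 hA hB hC hD

end
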